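/- Let ε ∈ (0,1), let P ⊆ ℝ^d be a nonempty compact convex set, and let X ⊆ ℝ^d be a finite set such that: (ii) for every x̄ ∈ X there exists c ∈ ℝ^d with (1−ε)·(c·x̄) > max{c·x : x ∈ P}; and (iii) for every pair of distinct points x̄₁, x̄₂ ∈ X, the midpoint (x̄₁ + x̄₂)/2 belongs to P. Then every compact set Q ⊆ ℝ^d that is an ε-approximated formulation of P and is an intersection of m closed half-spaces satisfies m ≥ |X|. -/

import Mathlib

noncomputable section

/-- Dot product on `ℝ^d`. -/
def dot {d : ℕ} (c x : Fin d → ℝ) : ℝ := ∑ i, c i * x i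

/-- `Q` is an `ε`-approximated formulation of `P`: `P ⊆ Q` and for every objective `c`,
`max {c·x : x ∈ P} ≥ (1-ε) · max {c·x : x ∈ Q}` (maxima expressed via `sSup`,
both sets being compact). -/
def IsApproxFormulation {d : ℕ} (ε : ℝ) (P Q : Set (Fin d → ℝ)) : Prop :=
  P ⊆ Q ∧ ∀ c : Fin d → ℝ,
    (1 - ε) * sSup ((fun x => dot c x) '' Q) ≤ sSup ((fun x => dot c x) '' P)

/-! A closed half-space has convex complement, so a half-space containing a point of `[x, y]`
cannot be violated by both `x` and `y`. If every point of `X` lies outside `Q` while the segment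
between any two of them meets `Q`, then distinct points of `X` violate distinct half-spaces of any
description of `Q`. Condition (ii) puts `X` outside every `ε`-approximated formulation of `P`,
and (iii) makes the segments meet `P ⊆ Q`. -/

section HidingSet

variable {𝕜 E ι : Type*} [Semiring 𝕜] [PartialOrder 𝕜] [AddCommMonoid E] [SMul 𝕜 E]

variable (𝕜) in
/-- `X` is a hiding set for `Q`: a set of points outside `Q` such that the segment joining any two
of them meets `Q`. Its size bounds from below the number of half-spaces needed to describe `Q`.
Unlike in the integer programming literature, the points of `X` need not be integral. -/
structure IsHidingSet (X Q : Set E) : Prop where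
  disjoint : Disjoint X Q
  segment_inter_nonempty : X.Pairwise fun x y => (segment 𝕜 x y ∩ Q).Nonempty

theorem IsHidingSet.encard_le_card {X : Set E} {C : ι → Set E}
    (hX : IsHidingSet 𝕜 X (⋂ i, C i)) (hC : ∀ i, Convex 𝕜 (C i)ᶜ) :
    X.encard ≤ ENat.card ι := by
  have violates (x : X) : ∃ i, ↑x ∈ (C i)ᶜ := by
    simpa using hX.disjoint.notMem_of_mem_left x.2
  choose f hf using violates
  refine ENat.card_le_card_of_injective (f := f) fun x y hxy => ?_
  by_contra hne
  obtain ⟨z, hz, hzC⟩ := hX.segment_inter_nonempty x.2 y.2 (Subtype.coe_ne_coe.mpr hne)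
  exact (hC (f x)).segment_subset (hf x) (hxy ▸ hf y) hz (Set.mem_iInter.mp hzC (f x))

end HidingSet

section ApproxFormulation

variable {d : ℕ}

theorem isLinearMap_dot (c : Fin d → ℝ) : IsLinearMap ℝ (dot c) where
  map_add := dotProduct_add c
  map_smul r := dotProduct_smul r c

theorem continuous_dot (c : Fin d → ℝ) : Continuous (dot c) :=
  (isLinearMap_dot c).mk'.continuous_of_finiteDimensional

theorem convex_compl_halfSpace (c : Fin d → ℝ) (r : ℝ) : Convex ℝ {x | dot c x ≤ r}ᶜ := by
  simpa only [Set.compl_ofPred, not_le] using convex_halfSpace_gt (isLinearMap_dot c) r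

theorem IsApproxFormulation.notMem {ε : ℝ} {P Q : Set (Fin d → ℝ)} {c x : Fin d → ℝ}
    (h : IsApproxFormulation ε P Q) (hε : ε ≤ 1) (hQ : BddAbove (dot c '' Q))
    (hx : sSup (dot c '' P) < (1 - ε) * dot c x) : x ∉ Q := fun hxQ =>
  hx.not_ge <| calc
    (1 - ε) * dot c x ≤ (1 - ε) * sSup (dot c '' Q) :=
      mul_le_mul_of_nonneg_left (le_csSup hQ (Set.mem_image_of_mem _ hxQ)) (sub_nonneg.mpr hε)
    _ ≤ sSup (dot c '' P) := h.2 c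

theorem IsApproxFormulation.isHidingSet {ε : ℝ} {P Q X : Set (Fin d → ℝ)}
    (h : IsApproxFormulation ε P Q) (hε : ε ≤ 1) (hP : P.Nonempty)
    (hQ : ∀ c, BddAbove (dot c '' Q))
    (hsep : ∀ x ∈ X, ∃ c, ∃ r ∈ upperBounds (dot c '' P), r < (1 - ε) * dot c x)
    (hseg : X.Pairwise fun x y => (segment ℝ x y ∩ P).Nonempty) :
    IsHidingSet ℝ X Q where
  disjoint := Set.disjoint_left.mpr fun x hx => by
    obtain ⟨c, r, hr, hrx⟩ := hsep x hx
    exact h.notMem hε (hQ c) ((csSup_le (hP.image _) hr).trans_lt hrx)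
  segment_inter_nonempty := hseg.mono' fun _ _ hxy => hxy.mono (Set.inter_subset_inter_right _ h.1)

theorem approx_formulation_needs_many_halfspaces_general {ι : Type*} {ε : ℝ} (hε : ε ≤ 1)
    {P Q X : Set (Fin d → ℝ)} (hP : P.Nonempty)
    (hsep : ∀ x ∈ X, ∃ c, ∃ r ∈ upperBounds (dot c '' P), r < (1 - ε) * dot c x)
    (hseg : X.Pairwise fun x y => (segment ℝ x y ∩ P).Nonempty)
    {a : ι → Fin d → ℝ} {b : ι → ℝ} (hQc : IsCompact Q) (hQ : Q = ⋂ i, {x | dot (a i) x ≤ b i})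
    (happ : IsApproxFormulation ε P Q) :
    X.encard ≤ ENat.card ι := by
  have hbdd (c : Fin d → ℝ) : BddAbove (dot c '' Q) := (hQc.image (continuous_dot c)).bddAbove
  have hX : IsHidingSet ℝ X Q := happ.isHidingSet hε hP hbdd hsep hseg
  rw [hQ] at hX
  exact hX.encard_le_card fun i => convex_compl_halfSpace (a i) (b i)

end ApproxFormulation

/-- let `ε ∈ (0,1)`, `P` a nonempty compact convex subset of `ℝ^d`, and `X`
a finite set such that (ii) each `x̄ ∈ X` satisfies `(1-ε)·(c·x̄) > max {c·x : x ∈ P}` for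
some objective `c`, and (iii) the midpoint of any two distinct points of `X` lies in `P`.
Then any compact `ε`-approximated formulation `Q` of `P` that is the intersection of `m`
closed half-spaces satisfies `m ≥ |X|`. -/
theorem approx_formulation_needs_many_halfspaces {d : ℕ} (ε : ℝ) (hε0 : 0 < ε) (hε1 : ε < 1)
    (P : Set (Fin d → ℝ)) (hPne : P.Nonempty) (hPc : IsCompact P) (hPconv : Convex ℝ P)
    (X : Finset (Fin d → ℝ))
    (hii : ∀ xbar ∈ X, ∃ c : Fin d → ℝ,
      sSup ((fun x => dot c x) '' P) < (1 - ε) * dot c xbar)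
    (hiii : ∀ x₁ ∈ X, ∀ x₂ ∈ X, x₁ ≠ x₂ → (1/2 : ℝ) • x₁ + (1/2 : ℝ) • x₂ ∈ P)
    (m : ℕ) (a : Fin m → Fin d → ℝ) (b : Fin m → ℝ) (Q : Set (Fin d → ℝ))
    (hQc : IsCompact Q) (hQ : Q = ⋂ i, {x : Fin d → ℝ | dot (a i) x ≤ b i})
    (happ : IsApproxFormulation ε P Q) :
    X.card ≤ m := by
  have hmax (c : Fin d → ℝ) := (hPc.image (continuous_dot c)).isLUB_sSup (hPne.image _)
  simpa using approx_formulation_needs_many_halfspaces_general (X := X) hε1.le hPne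
    (fun x hx => (hii x hx).imp fun c hc => ⟨_, (hmax c).1, hc⟩)
    (fun x hx y hy hxy =>
      ⟨_, ⟨1/2, 1/2, by norm_num, by norm_num, by norm_num, rfl⟩, hiii x hx y hy hxy⟩)
    hQc hQ happ
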